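/- For every x > 0, ∑_{n=1}^∞ 1/(e^{n²x} − 1) = 1/4 + π²/(6x) + (1/2)·√(π/x)·ζ(1/2) + (1/2)·√(π/x)·∑_{n=1}^∞ (1/√n)·(cos(2π√(πn/x)) − sin(2π√(πn/x)) − e^{−2π√(πn/x)})/(cosh(2π√(πn/x)) − cos(2π√(πn/x))). -/

import Mathlib

/-!
Write `g t u = 2 t / (t² + 4 π² u²)` (`pfTerm`) and let `G t u = (1 / π) arctan (2 π u / t)`
(`pfPrim`) be its antiderivative in `u`. Since `∑_{k ≥ 1} g t k = 1 / (eᵗ - 1) - 1 / t + 1 / 2` and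
`G t u → 1 / 2` as `u → ∞`, the differences `G t k - G t (k - 1) - g t k`, which are nonnegative
because `g t` decreases, sum over `k ≥ 1` to `1 / t - 1 / (eᵗ - 1)`. Putting `t = n² x` and summing
over `n` gives `π² / (6 x) - ∑ 1 / (e ^ (n² x) - 1)`, and by nonnegativity the sum over `n` may be
carried out first.

For fixed `u > 0` the sum over `n` is again a cotangent series: `hasSum_pfTerm_sq` gives
`∑_n g (n² x) u = ½ √(π / (x u)) (1 + r a)` with `a = 2 π √(π u / x)` and `r` (`ramR`) the quotient
in the dual series. An antiderivative of `r` is `2 arctan (e⁻ᵃ sin a / (1 - e⁻ᵃ cos a))`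
(`ramPrim`), which goes from `π / 2` at `0` to `0` at `∞`; so `∑_n G (n² x) u` equals `√(π u / x)`
plus a term running from `0` at `u = 0` to `-1 / 4` at `∞` (`primSum_eq`). Summing over `k`, the
latter telescopes to the constant `1 / 4`, and the differences `1 / √k - 2 (√k - √(k - 1))` sum to
`ζ(1/2)` (`hasSum_zeta_half`, by analytic continuation from `1 < re s`).
-/

open Filter Topology Complex

/-! ### The value of zeta at one half -/

/-- The difference between the `k + 1`-st term `(k + 1) ^ (-s)` of the zeta series and the integral
of `u ^ (-s)` over `[k, k + 1]`. -/
noncomputable def zetaTerm (k : ℕ) (s : ℂ) : ℂ :=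
  ((k + 1 : ℝ) : ℂ) ^ (-s) -
    (((k + 1 : ℝ) : ℂ) ^ (1 - s) / (1 - s) - ((k : ℝ) : ℂ) ^ (1 - s) / (1 - s))

lemma norm_zetaTerm_le (k : ℕ) (hk : 1 ≤ k) (s : ℂ) (hs : 0 < s.re) (hs1 : s ≠ 1) :
    ‖zetaTerm k s‖ ≤ ‖s‖ * (k : ℝ) ^ (-s.re - 1) := by
  have hk0 : (0 : ℝ) < k := by exact_mod_cast hk
  have hs0 : s ≠ 0 := by rintro rfl; simp at hs
  set C := ‖s‖ * (k : ℝ) ^ (-s.re - 1) with hC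
  have hC0 : 0 ≤ C := by positivity
  have hmemR : ((k : ℝ) + 1) ∈ Set.Icc (k : ℝ) (k + 1) := ⟨by linarith, le_rfl⟩
  have hmemL : (k : ℝ) ∈ Set.Icc (k : ℝ) (k + 1) := ⟨le_rfl, by linarith⟩
  -- On `[k, k + 1]` the function `u ^ (-s)` moves by at most `C`.
  have inner : ∀ u ∈ Set.Icc (k : ℝ) (k + 1),
      ‖(u : ℂ) ^ (-s) - ((k + 1 : ℝ) : ℂ) ^ (-s)‖ ≤ C := by
    intro u hu
    have h1 : ∀ y ∈ Set.Icc (k : ℝ) (k + 1), HasDerivWithinAt (fun y : ℝ => (y : ℂ) ^ (-s))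
        (-s * (y : ℂ) ^ (-s - 1)) (Set.Icc (k : ℝ) (k + 1)) y := by
      intro y hy
      have hy0 : y ≠ 0 := (lt_of_lt_of_le hk0 hy.1).ne'
      exact (hasDerivAt_ofReal_cpow_const hy0 (neg_ne_zero.mpr hs0)).hasDerivWithinAt
    have h2 : ∀ y ∈ Set.Icc (k : ℝ) (k + 1), ‖-s * (y : ℂ) ^ (-s - 1)‖ ≤ C := by
      intro y hy
      have hy0 : 0 < y := lt_of_lt_of_le hk0 hy.1
      rw [norm_mul, norm_neg, norm_cpow_eq_rpow_re_of_pos hy0, hC]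
      gcongr
      simp only [sub_re, neg_re, one_re]
      exact Real.rpow_le_rpow_of_nonpos hk0 hy.1 (by linarith)
    have := Convex.norm_image_sub_le_of_norm_hasDerivWithin_le h1 h2 (convex_Icc _ _) hmemR hu
    refine this.trans (mul_le_of_le_one_right hC0 ?_)
    rw [Real.norm_eq_abs, abs_le]
    constructor <;> linarith [hu.1, hu.2]
  have h1 : ∀ y ∈ Set.Icc (k : ℝ) (k + 1),
      HasDerivWithinAt (fun y : ℝ => (y : ℂ) ^ (1 - s) / (1 - s) - y * ((k + 1 : ℝ) : ℂ) ^ (-s))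
        ((y : ℂ) ^ (-s) - ((k + 1 : ℝ) : ℂ) ^ (-s)) (Set.Icc (k : ℝ) (k + 1)) y := by
    intro y hy
    have hy0 : y ≠ 0 := (lt_of_lt_of_le hk0 hy.1).ne'
    have a := hasDerivAt_ofReal_cpow_const' hy0 (r := -s) (by simpa using hs1)
    have b := (hasDerivAt_id y).ofReal_comp.mul_const (((k + 1 : ℝ) : ℂ) ^ (-s))
    have c := (a.sub b).hasDerivWithinAt (s := Set.Icc (k : ℝ) (k + 1))
    convert! c using 1
    · ext z; simp [add_comm (-s), sub_eq_add_neg]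
    · simp
  have := Convex.norm_image_sub_le_of_norm_hasDerivWithin_le h1 inner (convex_Icc _ _) hmemL hmemR
  have e : ‖((k : ℝ) + 1) - k‖ = 1 := by simp
  rw [e, mul_one, ← norm_neg] at this
  refine le_of_eq_of_le ?_ this
  rw [zetaTerm]
  congr 1
  push_cast
  ring

/-- For `1 < re s` the integrals telescope to `lim k ^ (1 - s) / (1 - s) = 0`. The improper lower
endpoint contributes nothing because `0 ^ (1 - s) = 0` in Mathlib for every `s ≠ 1`. -/
lemma zeta_eq_of_one_lt_re (s : ℂ) (hs : 1 < s.re) :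
    riemannZeta s = zetaTerm 0 s + ∑' k, zetaTerm (k + 1) s := by
  have hs1 : s ≠ 1 := by rintro rfl; simp at hs
  have hs0 : 1 - s ≠ 0 := sub_ne_zero.mpr hs1.symm
  have hsum : Summable (fun k => zetaTerm k s) := by
    rw [← summable_nat_add_iff 1]
    refine Summable.of_norm_bounded (g := fun k : ℕ => ‖s‖ * ((k + 1 : ℕ) : ℝ) ^ (-s.re - 1)) ?_
      fun k => norm_zetaTerm_le (k + 1) (by omega) s (by linarith) hs1
    refine Summable.mul_left _ ?_
    rw [summable_nat_add_iff 1 (f := fun k : ℕ => (k : ℝ) ^ (-s.re - 1))]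
    exact Real.summable_nat_rpow.mpr (by linarith)
  have h1 := hsum.hasSum.tendsto_sum_nat
  have hz : Summable (fun n : ℕ => 1 / (n + 1 : ℂ) ^ s) := by
    have := (Complex.summable_one_div_nat_cpow (p := s)).mpr hs
    rw [← summable_nat_add_iff 1] at this
    simpa using this
  have h2 := hz.hasSum.tendsto_sum_nat
  rw [← zeta_eq_tsum_one_div_nat_add_one_cpow hs] at h2
  have h3 : Tendsto (fun n : ℕ => ((n : ℝ) : ℂ) ^ (1 - s) / (1 - s)) atTop (𝓝 0) := by
    rw [← zero_div (1 - s)]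
    refine Tendsto.div_const ?_ _
    rw [tendsto_zero_iff_norm_tendsto_zero]
    have := (tendsto_rpow_neg_atTop (y := s.re - 1) (by linarith)).comp
      (tendsto_natCast_atTop_atTop (R := ℝ))
    refine this.congr' ?_
    filter_upwards [eventually_gt_atTop 0] with n hn
    rw [norm_cpow_eq_rpow_re_of_pos (by exact_mod_cast hn)]
    simp
  have h4 := h2.sub h3
  rw [sub_zero] at h4
  have h5 : ∑' k, zetaTerm k s = riemannZeta s := by
    refine tendsto_nhds_unique h1 (h4.congr fun n => ?_)
    simp only [zetaTerm, Finset.sum_sub_distrib]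
    congr 1
    · refine Finset.sum_congr rfl fun i _ => ?_
      rw [cpow_neg]; push_cast; simp
    · have := Finset.sum_range_sub (fun n : ℕ => ((n : ℝ) : ℂ) ^ (1 - s) / (1 - s)) n
      simp only [Finset.sum_sub_distrib] at this
      push_cast at this ⊢
      rw [this]
      simp [zero_cpow hs0]
  rw [← h5, hsum.tsum_eq_zero_add]

/-- Analytic continuation of `zeta_eq_of_one_lt_re` to `s = 1 / 2`. -/
lemma zeta_half_eq :
    riemannZeta (1 / 2) = zetaTerm 0 (1 / 2) + ∑' k, zetaTerm (k + 1) (1 / 2) := by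
  -- A convex bounded region joining `1 / 2` to `2 + 2 i`, on one side of a line through the pole `1`.
  let U : Set ℂ := {s | 1 / 4 < s.re} ∩ ({s | 0 < s.im - s.re + 1} ∩ Metric.ball 0 10)
  have hUo : IsOpen U :=
    (isOpen_lt continuous_const continuous_re).inter
      ((isOpen_lt continuous_const (by fun_prop)).inter Metric.isOpen_ball)
  have hUc : Convex ℝ U := by
    refine (convex_halfSpace_re_gt _).inter (Convex.inter ?_ (convex_ball _ _))
    intro a ha b hb p q hp hq hpq
    simp only [Set.mem_ofPred_eq, add_im, add_re, real_smul, mul_im, mul_re, ofReal_re,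
      ofReal_im, zero_mul, sub_zero, add_zero] at *
    rcases hp.eq_or_lt with rfl | hp
    · simp at hpq; subst hpq; simpa using hb
    · nlinarith [mul_pos hp ha, mul_nonneg hq hb.le]
  have hU1 : ∀ s ∈ U, s ≠ 1 := by
    rintro s hs rfl
    simpa using hs.2.1
  have hd0 : ∀ k : ℕ, DifferentiableOn ℂ (zetaTerm (k + 1)) U := by
    intro k s hs
    have h1 : 1 - s ≠ 0 := sub_ne_zero.mpr (hU1 s hs).symm
    refine DifferentiableAt.differentiableWithinAt ?_
    have e1 : (((k + 1 : ℕ) + 1 : ℝ) : ℂ) ≠ 0 := by norm_cast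
    have e2 : (((k + 1 : ℕ) : ℝ) : ℂ) ≠ 0 := by norm_cast
    unfold zetaTerm
    refine DifferentiableAt.sub ?_ (DifferentiableAt.sub (DifferentiableAt.div ?_ (by fun_prop) h1)
      (DifferentiableAt.div ?_ (by fun_prop) h1))
    · exact DifferentiableAt.const_cpow (by fun_prop) (Or.inl e1)
    · exact DifferentiableAt.const_cpow (by fun_prop) (Or.inl e1)
    · exact DifferentiableAt.const_cpow (by fun_prop) (Or.inl e2)
  have hd00 : DifferentiableOn ℂ (zetaTerm 0) U := by
    have : Set.EqOn (zetaTerm 0) (fun s => 1 - 1 / (1 - s)) U := by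
      intro s hs
      have h1 : 1 - s ≠ 0 := sub_ne_zero.mpr (hU1 s hs).symm
      simp [zetaTerm, zero_cpow h1]
    refine DifferentiableOn.congr ?_ this
    intro s hs
    have h1 : 1 - s ≠ 0 := sub_ne_zero.mpr (hU1 s hs).symm
    refine DifferentiableAt.differentiableWithinAt ?_
    exact (differentiableAt_const _).sub ((differentiableAt_const _).div (by fun_prop) h1)
  have hsumm : Summable (fun k : ℕ => 10 * ((k + 1 : ℕ) : ℝ) ^ (-(5 / 4) : ℝ)) := by
    refine Summable.mul_left _ ?_
    rw [summable_nat_add_iff 1 (f := fun k : ℕ => (k : ℝ) ^ (-(5 / 4) : ℝ))]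
    exact Real.summable_nat_rpow.mpr (by norm_num)
  have hdt : DifferentiableOn ℂ (fun s => ∑' k, zetaTerm (k + 1) s) U := by
    refine differentiableOn_tsum_of_summable_norm hsumm hd0 hUo fun k s hs => ?_
    have hre : 1 / 4 < s.re := hs.1
    refine (norm_zetaTerm_le (k + 1) (by omega) s (by linarith) (hU1 s hs)).trans ?_
    have hn : ‖s‖ ≤ 10 := by simpa using (Metric.mem_ball.mp hs.2.2).le
    gcongr
    · simp
    · linarith
  have hf := (hd00.add hdt).analyticOnNhd hUo
  have hg : AnalyticOnNhd ℂ riemannZeta U :=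
    DifferentiableOn.analyticOnNhd
      (fun s hs => (differentiableAt_riemannZeta (hU1 s hs)).differentiableWithinAt) hUo
  have hmem : (2 + 2 * I : ℂ) ∈ U := by
    refine ⟨by norm_num, by norm_num, ?_⟩
    rw [mem_ball_zero_iff]
    calc ‖(2 + 2 * I : ℂ)‖ ≤ ‖(2 : ℂ)‖ + ‖2 * I‖ := norm_add_le _ _
      _ < 10 := by simp; norm_num
  have hhalf : (1 / 2 : ℂ) ∈ U := by
    refine ⟨by norm_num, by norm_num, ?_⟩
    rw [mem_ball_zero_iff]
    norm_num
  refine hg.eqOn_of_preconnected_of_eventuallyEq hf hUc.isPreconnected hmem ?_ hhalf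
  have : {s : ℂ | 1 < s.re} ∈ 𝓝 (2 + 2 * I : ℂ) :=
    (isOpen_lt continuous_const continuous_re).mem_nhds (by norm_num)
  filter_upwards [this] with s hs
  exact zeta_eq_of_one_lt_re s hs

/-- `ζ(1/2)` as the regularised value of `∑ 1 / √k`. -/
lemma hasSum_zeta_half :
    HasSum (fun k : ℕ => 1 / √(k + 1 : ℝ) - 2 * (√(k + 1 : ℝ) - √(k : ℝ)))
      (riemannZeta (1 / 2)).re := by
  have hsum : Summable (fun k => zetaTerm k (1 / 2)) := by
    rw [← summable_nat_add_iff 1]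
    refine Summable.of_norm_bounded
      (g := fun k : ℕ => ‖(1 / 2 : ℂ)‖ * ((k + 1 : ℕ) : ℝ) ^ (-(1 / 2 : ℂ).re - 1)) ?_
      fun k => norm_zetaTerm_le (k + 1) (by omega) _ (by norm_num) (by norm_num)
    refine Summable.mul_left _ ?_
    rw [summable_nat_add_iff 1 (f := fun k : ℕ => (k : ℝ) ^ (-(1 / 2 : ℂ).re - 1))]
    exact Real.summable_nat_rpow.mpr (by norm_num)
  have h := hsum.hasSum
  rw [hsum.tsum_eq_zero_add, ← zeta_half_eq] at h
  have key : ∀ k : ℕ, 1 / √(k + 1 : ℝ) - 2 * (√(k + 1 : ℝ) - √(k : ℝ)) = (zetaTerm k (1 / 2)).re := by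
    intro k
    have e : (1 : ℂ) - 1 / 2 = ((1 / 2 : ℝ) : ℂ) := by push_cast; ring
    have e' : (-(1 / 2) : ℂ) = ((-(1 / 2) : ℝ) : ℂ) := by push_cast; ring
    have hk : (0 : ℝ) ≤ k := k.cast_nonneg
    have hk' : (0 : ℝ) ≤ k + 1 := by positivity
    rw [zetaTerm, e, e', ← ofReal_cpow hk', ← ofReal_cpow hk', ← ofReal_cpow hk, ← ofReal_div,
      ← ofReal_div, ← ofReal_sub, ← ofReal_sub, ofReal_re, Real.rpow_neg hk',
      ← Real.sqrt_eq_rpow, ← Real.sqrt_eq_rpow]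
    ring
  simp_rw [key]
  exact Complex.hasSum_re h

/-! ### Two cotangent series -/

/-- The quotient `(cos a - sin a - e⁻ᵃ) / (cosh a - cos a)` of the dual series. -/
noncomputable def ramR (a : ℝ) : ℝ :=
  (Real.cos a - Real.sin a - Real.exp (-a)) / (Real.cosh a - Real.cos a)

/-- The denominator is `|1 - e ^ (-a - i a)|²`. -/
lemma ramD_pos {a : ℝ} (ha : 0 < a) :
    0 < 1 - 2 * Real.exp (-a) * Real.cos a + Real.exp (-a) ^ 2 := by
  have h1 : Real.exp (-a) < 1 := by simpa using ha
  have h0 := Real.exp_pos (-a)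
  nlinarith [Real.cos_le_one a, mul_le_mul_of_nonneg_left (Real.cos_le_one a) h0.le,
    mul_pos (sub_pos.mpr h1) (sub_pos.mpr h1)]

lemma ramR_eq {a : ℝ} (ha : 0 < a) :
    ramR a = 2 * Real.exp (-a) * (Real.cos a - Real.sin a - Real.exp (-a)) /
      (1 - 2 * Real.exp (-a) * Real.cos a + Real.exp (-a) ^ 2) := by
  have hD := ramD_pos ha
  have h0 := Real.exp_pos (-a)
  have e : Real.cosh a - Real.cos a =
      (1 - 2 * Real.exp (-a) * Real.cos a + Real.exp (-a) ^ 2) / (2 * Real.exp (-a)) := by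
    have : Real.exp a = (Real.exp (-a))⁻¹ := by rw [Real.exp_neg, inv_inv]
    rw [Real.cosh_eq, this]
    field_simp
    ring
  rw [ramR, e]
  field_simp

lemma one_add_ramR_eq {a : ℝ} (ha : 0 < a) :
    1 + ramR a = (1 - Real.exp (-a) ^ 2 - 2 * Real.exp (-a) * Real.sin a) /
      (1 - 2 * Real.exp (-a) * Real.cos a + Real.exp (-a) ^ 2) := by
  have hD := ramD_pos ha
  rw [ramR_eq ha]
  field_simp
  ring

lemma mem_integerComplement_of_im_pos {w : ℂ} (hw : 0 < w.im) : w ∈ Complex.integerComplement := by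
  rw [mem_integerComplement_iff]
  rintro ⟨n, rfl⟩
  simp at hw

/-- Partial fractions of the cotangent, in the form `π cot (π w) = 1 / w - 2 w ∑ 1 / (N² - w²)`. -/
lemma hasSum_cot {w : ℂ} (hw : 0 < w.im) :
    HasSum (fun n : ℕ => 1 / (((n : ℂ) + 1) ^ 2 - w ^ 2))
      ((1 / w - Real.pi * Complex.cot (Real.pi * w)) / (2 * w)) := by
  have hw' := mem_integerComplement_of_im_pos hw
  have hw0 : w ≠ 0 := Complex.integerComplement.ne_zero hw'
  have h := (summable_cotTerm hw').hasSum
  have h2 : ∑' n, cotTerm w n = Real.pi * cot (Real.pi * w) - 1 / w := (cot_series_rep' hw').symm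
  rw [h2] at h
  have h3 := h.mul_left (-1 / (2 * w))
  convert! h3 using 1
  · ext n
    rw [cotTerm_identity hw']
    have e1 : w + ((n : ℂ) + 1) ≠ 0 := by
      have := integerComplement_add_ne_zero hw' (n + 1 : ℤ)
      push_cast at this; exact this
    have e2 : w - ((n : ℂ) + 1) ≠ 0 := by
      have := integerComplement_add_ne_zero hw' (-(n + 1) : ℤ)
      push_cast at this
      rwa [sub_eq_add_neg]
    have e3 : ((n : ℂ) + 1) ^ 2 - w ^ 2 ≠ 0 := by
      have : ((n : ℂ) + 1) ^ 2 - w ^ 2 = -((w + (n + 1)) * (w - (n + 1))) := by ring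
      rw [this]
      exact neg_ne_zero.mpr (mul_ne_zero e1 e2)
    field_simp
    ring
  · field_simp
    ring

/-- The summand `2 t / (t² + 4 π² u²)` in the partial fraction expansion of `1 / (eᵗ - 1)`. -/
noncomputable def pfTerm (t u : ℝ) : ℝ := 2 * t / (t ^ 2 + 4 * Real.pi ^ 2 * u ^ 2)

/-- Partial fractions of `1 / (eᵗ - 1)`: `hasSum_cot` at `w = i t / (2 π)`. -/
lemma hasSum_pfTerm_nat {t : ℝ} (ht : 0 < t) :
    HasSum (fun k : ℕ => pfTerm t (k + 1)) (1 / (Real.exp t - 1) - 1 / t + 1 / 2) := by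
  have hpi := Real.pi_pos
  have hpi' : (Real.pi : ℂ) ≠ 0 := by exact_mod_cast hpi.ne'
  set w : ℂ := ((t / (2 * Real.pi) : ℝ) : ℂ) * I with hw
  have hw2 : w ^ 2 = ((-(t / (2 * Real.pi)) ^ 2 : ℝ) : ℂ) := by
    rw [hw, mul_pow, I_sq]; push_cast; ring
  have him : 0 < w.im := by
    rw [hw, mul_comm, I_mul_im, ofReal_re]; positivity
  have h := (hasSum_cot him).mul_left ((t / (2 * Real.pi ^ 2) : ℝ) : ℂ)
  have hE : 1 < Real.exp t := by simpa using ht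
  have hval : ((t / (2 * Real.pi ^ 2) : ℝ) : ℂ) *
      ((1 / w - Real.pi * Complex.cot (Real.pi * w)) / (2 * w)) =
      ((1 / (Real.exp t - 1) - 1 / t + 1 / 2 : ℝ) : ℂ) := by
    rw [Complex.cot_pi_eq_exp_ratio]
    have e1 : 2 * (Real.pi : ℂ) * I * w = ((-t : ℝ) : ℂ) := by
      rw [hw]; push_cast; field_simp; rw [I_sq]; ring
    rw [e1, ← ofReal_exp, Real.exp_neg, hw]
    have e2 : (Real.exp t : ℂ) ≠ 0 := by exact_mod_cast (Real.exp_pos t).ne'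
    have e3 : (Real.exp t : ℂ) - 1 ≠ 0 := by
      rw [← ofReal_one, ← ofReal_sub]; exact_mod_cast (sub_pos.mpr hE).ne'
    have e4 : (t : ℂ) ≠ 0 := by exact_mod_cast ht.ne'
    have e5 : (1 : ℂ) - (Real.exp t : ℂ)⁻¹ ≠ 0 := by
      rw [sub_ne_zero]; intro hh
      apply e3
      field_simp at hh
      rw [hh]; ring
    simp only [ofReal_add, ofReal_sub, ofReal_div, ofReal_one, ofReal_ofNat, ofReal_mul, ofReal_pow,
      ofReal_inv]
    generalize (Real.exp t : ℂ) = q at *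
    have e6 : q⁻¹ + 1 = (q + 1) / q := by field_simp; ring
    have e7 : 1 - q⁻¹ = (q - 1) / q := by field_simp
    rw [e6, e7]
    field_simp
    simp only [I_sq]
    ring
  rw [hval] at h
  have h' := Complex.hasSum_re h
  rw [ofReal_re] at h'
  convert! h' using 1
  ext k
  have e : ((t / (2 * Real.pi ^ 2) : ℝ) : ℂ) * (1 / (((k : ℂ) + 1) ^ 2 - w ^ 2)) =
      ((t / (2 * Real.pi ^ 2) * (1 / (((k : ℝ) + 1) ^ 2 + (t / (2 * Real.pi)) ^ 2)) : ℝ) : ℂ) := by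
    rw [hw2]; push_cast; ring
  rw [e, ofReal_re, pfTerm]
  field_simp
  ring

/-- The sum over the squares is evaluated by `hasSum_cot` at `w = p (1 + i)`, `p = √(π u / x)`, for
which `w² = 2 i p²` and `pfTerm (N² x) u = (2 / x) Re (1 / (N² - w²))`. -/
lemma hasSum_pfTerm_sq {x u : ℝ} (hx : 0 < x) (hu : 0 < u) :
    HasSum (fun n : ℕ => pfTerm ((n + 1) ^ 2 * x) u)
      (Real.pi / (2 * x * √(Real.pi * u / x)) * (1 + ramR (2 * Real.pi * √(Real.pi * u / x)))) := by
  have hpi := Real.pi_pos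
  set p := √(Real.pi * u / x) with hp
  have hp0 : 0 < p := by positivity
  have hp2 : p ^ 2 = Real.pi * u / x := Real.sq_sqrt (by positivity)
  set a := 2 * Real.pi * p with ha
  have ha0 : 0 < a := by positivity
  set w : ℂ := (p : ℂ) * (1 + I) with hw
  have hw2 : w ^ 2 = ((2 * p ^ 2 : ℝ) : ℂ) * I := by
    rw [hw, mul_pow]; push_cast; ring_nf; rw [I_sq]; ring
  have him : 0 < w.im := by simp [hw, hp0]
  have h := Complex.hasSum_re (hasSum_cot him)
  have h := h.mul_left (2 / x)
  convert! h using 1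
  · ext n
    have hN : (0 : ℝ) < n + 1 := by positivity
    have e : (((n : ℂ) + 1) ^ 2 - w ^ 2) = ⟨((n : ℝ) + 1) ^ 2, -(2 * p ^ 2)⟩ := by
      rw [hw2]
      apply Complex.ext <;> simp [pow_two]
    rw [e, one_div, inv_re, normSq_mk, pfTerm]
    have : 4 * Real.pi ^ 2 * u ^ 2 = 4 * (p ^ 2) ^ 2 * x ^ 2 := by rw [hp2]; field_simp
    rw [this]
    field_simp
    ring
  · have hD := ramD_pos ha0
    rw [one_add_ramR_eq ha0]
    set E := Real.exp (-a)
    set D := 1 - 2 * E * Real.cos a + E ^ 2 with hDdef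
    have hq : Complex.exp (2 * Real.pi * I * w) = ⟨E * Real.cos a, E * Real.sin a⟩ := by
      have e1 : 2 * Real.pi * I * w = ((-a : ℝ) : ℂ) + (a : ℝ) * I := by
        rw [hw, ha]; push_cast; ring_nf; rw [I_sq]; ring
      rw [e1]
      apply Complex.ext
      · rw [Complex.exp_re]; simp [E]
      · rw [Complex.exp_im]; simp [E]
    have hcot : Complex.cot (Real.pi * w) = ⟨2 * E * Real.sin a / D, -(1 - E ^ 2) / D⟩ := by
      rw [Complex.cot_pi_eq_exp_ratio, hq]
      have hne : I * (1 - (⟨E * Real.cos a, E * Real.sin a⟩ : ℂ)) ≠ 0 := by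
        intro h0
        have h0' : 1 - (⟨E * Real.cos a, E * Real.sin a⟩ : ℂ) = 0 := by simpa using h0
        have hr := congrArg Complex.re h0'
        have hi := congrArg Complex.im h0'
        simp only [sub_re, one_re, zero_re, sub_im, one_im, zero_im] at hr hi
        have : D = 0 := by
          have := Real.sin_sq_add_cos_sq a
          calc D = (1 - E * Real.cos a) ^ 2 + (0 - E * Real.sin a) ^ 2 := by
                rw [hDdef]; linear_combination (-E ^ 2) * this
            _ = 0 := by rw [hr, hi]; ring
        exact hD.ne' this
      rw [div_eq_iff hne]
      have hsc := Real.sin_sq_add_cos_sq a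
      apply Complex.ext
      · simp only [add_re, one_re, mul_re, I_re, I_im, sub_re, sub_im, one_im, mul_im]
        field_simp
        rw [hDdef]
        linear_combination (-2 * E ^ 2) * hsc
      · simp only [add_im, one_re, mul_re, I_re, I_im, sub_re, sub_im, one_im, mul_im]
        field_simp
        rw [hDdef]
        ring
    have hinv : 1 / w = ⟨1 / (2 * p), -(1 / (2 * p))⟩ := by
      have hw0 : w ≠ 0 := fun h0 => by simp [h0] at him
      rw [div_eq_iff hw0, hw]
      apply Complex.ext
      · simp
        field_simp
        norm_num
      · simp
    have e : (1 / w - Real.pi * Complex.cot (Real.pi * w)) / (2 * w) =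
        ((1 / 2 : ℝ) : ℂ) * ((1 / w) * (1 / w - Real.pi * Complex.cot (Real.pi * w))) := by
      push_cast; ring_nf
    rw [e, hinv, hcot, re_ofReal_mul]
    simp only [mul_re, sub_re, sub_im, mul_im, ofReal_re, ofReal_im]
    field_simp
    ring

/-! ### Antiderivatives -/

/-- The antiderivative in `u` of `pfTerm t u` that vanishes at `u = 0`. -/
noncomputable def pfPrim (t u : ℝ) : ℝ := 1 / Real.pi * Real.arctan (2 * Real.pi * u / t)

lemma hasDerivAt_pfPrim {t : ℝ} (ht : 0 < t) (u : ℝ) :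
    HasDerivAt (pfPrim t) (pfTerm t u) u := by
  have hpi := Real.pi_pos
  have h := ((((hasDerivAt_id u).const_mul (2 * Real.pi)).div_const t).arctan).const_mul
    (1 / Real.pi)
  refine h.congr_deriv ?_
  simp only [id, pfTerm]
  field_simp
  ring

/-- Twice the argument of `1 - e ^ (-a - i a)`; an antiderivative of `ramR` on `(0, ∞)`. -/
noncomputable def ramPrim (a : ℝ) : ℝ :=
  2 * Real.arctan (Real.exp (-a) * Real.sin a / (1 - Real.exp (-a) * Real.cos a))

lemma one_sub_pos {a : ℝ} (ha : 0 < a) : 0 < 1 - Real.exp (-a) * Real.cos a := by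
  have h1 : Real.exp (-a) < 1 := by simpa using ha
  have h0 := Real.exp_pos (-a)
  nlinarith [mul_le_mul_of_nonneg_left (Real.cos_le_one a) h0.le]

lemma hasDerivAt_exp_sin (a : ℝ) : HasDerivAt (fun a => Real.exp (-a) * Real.sin a)
    (Real.exp (-a) * (Real.cos a - Real.sin a)) a := by
  refine (((hasDerivAt_neg a).exp).mul (Real.hasDerivAt_sin a)).congr_deriv ?_
  ring

lemma hasDerivAt_one_sub_exp_cos (a : ℝ) : HasDerivAt (fun a => 1 - Real.exp (-a) * Real.cos a)
    (Real.exp (-a) * (Real.cos a + Real.sin a)) a := by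
  refine ((((hasDerivAt_neg a).exp).mul (Real.hasDerivAt_cos a)).const_sub 1).congr_deriv ?_
  ring

lemma hasDerivAt_ramPrim {a : ℝ} (ha : 0 < a) : HasDerivAt ramPrim (ramR a) a := by
  have hM := one_sub_pos ha
  have hD := ramD_pos ha
  have h := (((hasDerivAt_exp_sin a).div (hasDerivAt_one_sub_exp_cos a) hM.ne').arctan).const_mul 2
  refine h.congr_deriv ?_
  rw [ramR_eq ha]
  have hsc := Real.sin_sq_add_cos_sq a
  simp only [Pi.div_apply]
  have e : 1 + (Real.exp (-a) * Real.sin a / (1 - Real.exp (-a) * Real.cos a)) ^ 2 =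
      (1 - 2 * Real.exp (-a) * Real.cos a + Real.exp (-a) ^ 2) /
        (1 - Real.exp (-a) * Real.cos a) ^ 2 := by
    field_simp
    linear_combination (Real.exp (-a) ^ 2) * hsc
  rw [e]
  field_simp
  linear_combination (-Real.exp (-a)) * hsc

lemma tendsto_ramPrim_zero : Tendsto ramPrim (𝓝[>] 0) (𝓝 (Real.pi / 2)) := by
  have h1 := (hasDerivAt_exp_sin 0).tendsto_slope_zero_right
  have h2 := (hasDerivAt_one_sub_exp_cos 0).tendsto_slope_zero_right
  simp only [neg_zero, Real.exp_zero, Real.cos_zero, Real.sin_zero, sub_zero, mul_one, zero_add,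
    mul_zero, sub_self, add_zero, smul_eq_mul] at h1 h2
  have h3 := h1.div h2 one_ne_zero
  rw [div_one] at h3
  have h4 := ((Real.continuous_arctan.tendsto 1).comp h3).const_mul 2
  rw [Real.arctan_one, show 2 * (Real.pi / 4) = Real.pi / 2 by ring] at h4
  refine h4.congr' ?_
  filter_upwards [self_mem_nhdsWithin] with a ha
  have ha : 0 < a := ha
  simp only [Function.comp, Pi.div_apply, ramPrim]
  rw [mul_div_mul_left _ _ (inv_ne_zero ha.ne')]

lemma tendsto_ramPrim_atTop : Tendsto ramPrim atTop (𝓝 0) := by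
  have h0 : Tendsto (fun a : ℝ => Real.exp (-a)) atTop (𝓝 0) := Real.tendsto_exp_neg_atTop_nhds_zero
  have hs : Tendsto (fun a : ℝ => Real.exp (-a) * Real.sin a) atTop (𝓝 0) := by
    refine squeeze_zero_norm (fun a => ?_) h0
    rw [norm_mul, Real.norm_eq_abs, Real.norm_eq_abs, abs_of_pos (Real.exp_pos _)]
    exact mul_le_of_le_one_right (Real.exp_pos _).le (Real.abs_sin_le_one a)
  have hc : Tendsto (fun a : ℝ => Real.exp (-a) * Real.cos a) atTop (𝓝 0) := by
    refine squeeze_zero_norm (fun a => ?_) h0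
    rw [norm_mul, Real.norm_eq_abs, Real.norm_eq_abs, abs_of_pos (Real.exp_pos _)]
    exact mul_le_of_le_one_right (Real.exp_pos _).le (Real.abs_cos_le_one a)
  have h := ((Real.continuous_arctan.tendsto _).comp
    (hs.div (hc.const_sub 1) (by norm_num))).const_mul 2
  simp only [zero_div, sub_zero, Real.arctan_zero, mul_zero] at h
  exact h

lemma summable_inv_sq_mul {x : ℝ} : Summable (fun n : ℕ => 1 / (((n : ℝ) + 1) ^ 2 * x)) := by
  have h := (summable_nat_add_iff 1 (f := fun n : ℕ => 1 / (n : ℝ) ^ 2)).mpr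
    (Real.summable_one_div_nat_pow.mpr one_lt_two)
  have h := h.mul_right (1 / x)
  refine h.congr fun n => ?_
  push_cast
  rw [one_div_mul_one_div]

lemma pfTerm_nonneg {t : ℝ} (ht : 0 < t) (u : ℝ) : 0 ≤ pfTerm t u := by
  unfold pfTerm; positivity

lemma pfTerm_le {t : ℝ} (ht : 0 < t) (u : ℝ) : pfTerm t u ≤ 2 * (1 / t) := by
  have hpi := Real.pi_pos
  rw [pfTerm, mul_one_div, div_le_div_iff₀ (by positivity) ht]
  nlinarith [mul_nonneg (sq_nonneg Real.pi) (sq_nonneg u)]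

/-- The sum over `n` of the antiderivatives `pfPrim ((n + 1)² x)`. -/
noncomputable def primSum (x u : ℝ) : ℝ := ∑' n : ℕ, pfPrim ((n + 1) ^ 2 * x) u

lemma norm_pfTerm_le {x : ℝ} (hx : 0 < x) (n : ℕ) (u : ℝ) :
    ‖pfTerm ((n + 1) ^ 2 * x) u‖ ≤ 2 * (1 / (((n : ℝ) + 1) ^ 2 * x)) := by
  have ht : 0 < ((n : ℝ) + 1) ^ 2 * x := by positivity
  rw [Real.norm_of_nonneg (pfTerm_nonneg ht u)]
  exact pfTerm_le ht u

lemma summable_pfPrim {x : ℝ} (hx : 0 < x) (u : ℝ) :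
    Summable (fun n : ℕ => pfPrim ((n + 1) ^ 2 * x) u) := by
  refine summable_of_summable_hasDerivAt (g := fun (n : ℕ) u => pfPrim ((n + 1) ^ 2 * x) u)
    (y₀ := 0) (summable_inv_sq_mul.mul_left 2)
    (fun n y => hasDerivAt_pfPrim (by positivity) y) (norm_pfTerm_le hx) ?_ u
  simp [pfPrim, summable_zero]

lemma hasDerivAt_primSum {x : ℝ} (hx : 0 < x) (u : ℝ) :
    HasDerivAt (primSum x) (∑' n : ℕ, pfTerm ((n + 1) ^ 2 * x) u) u :=
  hasDerivAt_tsum (g := fun (n : ℕ) u => pfPrim ((n + 1) ^ 2 * x) u)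
    (y₀ := 0) (summable_inv_sq_mul.mul_left 2)
    (fun n y => hasDerivAt_pfPrim (by positivity) y) (norm_pfTerm_le hx) (summable_pfPrim hx 0) u

lemma primSum_zero (x : ℝ) : primSum x 0 = 0 := by simp [primSum, pfPrim]

/-- Closed form of `∑ (1 / π) arctan (2 π u / (N² x))`: both sides have the same derivative on
`(0, ∞)` and tend to `0` at `0`. -/
lemma primSum_eq {x u : ℝ} (hx : 0 < x) (hu : 0 < u) :
    primSum x u = √(Real.pi * u / x) +
      1 / (2 * Real.pi) * (ramPrim (2 * Real.pi * √(Real.pi * u / x)) - Real.pi / 2) := by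
  have hpi := Real.pi_pos
  set H : ℝ → ℝ := fun u => √(Real.pi * u / x) +
      1 / (2 * Real.pi) * (ramPrim (2 * Real.pi * √(Real.pi * u / x)) - Real.pi / 2) with hH
  have hder : ∀ v ∈ Set.Ioi (0 : ℝ), HasDerivAt (fun v => primSum x v - H v) 0 v := by
    intro v hv
    have hv : 0 < v := hv
    have hq : 0 < Real.pi * v / x := by positivity
    have h1 : HasDerivAt (fun v => √(Real.pi * v / x)) (Real.pi / (2 * x * √(Real.pi * v / x))) v := by
      refine ((((hasDerivAt_id v).const_mul Real.pi).div_const x).sqrt hq.ne').congr_deriv ?_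
      simp only [id]
      field_simp
    have h2 : HasDerivAt (fun v => ramPrim (2 * Real.pi * √(Real.pi * v / x)))
        (ramR (2 * Real.pi * √(Real.pi * v / x)) *
          (2 * Real.pi * (Real.pi / (2 * x * √(Real.pi * v / x))))) v :=
      (hasDerivAt_ramPrim (by positivity)).comp v (h1.const_mul (2 * Real.pi))
    have h3 := h1.add ((h2.sub_const (Real.pi / 2)).const_mul (1 / (2 * Real.pi)))
    have h4 := (hasDerivAt_primSum hx v).sub h3
    refine h4.congr_deriv ?_
    rw [(hasSum_pfTerm_sq hx hv).tsum_eq]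
    field_simp
    ring
  have hconst : ∀ v ∈ Set.Ioi (0 : ℝ), primSum x v - H v = primSum x u - H u := by
    intro v hv
    refine isOpen_Ioi.is_const_of_deriv_eq_zero isPreconnected_Ioi
      (fun w hw => (hder w hw).differentiableAt.differentiableWithinAt)
      (fun w hw => (hder w hw).deriv) hv hu
  have hl1 : Tendsto (primSum x) (𝓝[>] 0) (𝓝 0) := by
    have := (hasDerivAt_primSum hx 0).continuousAt.tendsto
    rw [primSum_zero] at this
    exact this.mono_left nhdsWithin_le_nhds
  have hs0 : Tendsto (fun v => √(Real.pi * v / x)) (𝓝[>] 0) (𝓝 0) := by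
    have : Continuous (fun v => √(Real.pi * v / x)) := by fun_prop
    have := this.tendsto 0
    simp only [mul_zero, zero_div, Real.sqrt_zero] at this
    exact this.mono_left nhdsWithin_le_nhds
  have hs1 : Tendsto (fun v => 2 * Real.pi * √(Real.pi * v / x)) (𝓝[>] 0) (𝓝[>] 0) := by
    refine tendsto_nhdsWithin_iff.mpr ⟨by simpa using hs0.const_mul (2 * Real.pi), ?_⟩
    filter_upwards [self_mem_nhdsWithin] with v hv
    have hv : 0 < v := hv
    rw [Set.mem_Ioi]
    positivity
  have hl2 : Tendsto H (𝓝[>] 0) (𝓝 0) := by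
    have := hs0.add (((tendsto_ramPrim_zero.comp hs1).sub_const (Real.pi / 2)).const_mul
      (1 / (2 * Real.pi)))
    simpa [hH] using this
  have hl3 := hl1.sub hl2
  rw [sub_zero] at hl3
  have hl4 : Tendsto (fun v => primSum x v - H v) (𝓝[>] 0) (𝓝 (primSum x u - H u)) := by
    refine tendsto_const_nhds.congr' ?_
    filter_upwards [self_mem_nhdsWithin] with v hv
    exact (hconst v hv).symm
  have := tendsto_nhds_unique hl4 hl3
  exact sub_eq_zero.mp this

/-- `pfTerm t` decreases on `[0, ∞)`, so its value at `k + 1` is at most its mean over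
`[k, k + 1]`. -/
lemma pfTerm_le_pfPrim_sub {t : ℝ} (ht : 0 < t) (k : ℕ) :
    pfTerm t (k + 1) ≤ pfPrim t (k + 1) - pfPrim t k := by
  have hpi := Real.pi_pos
  have hk : (k : ℝ) < k + 1 := by linarith
  obtain ⟨c, hc, he⟩ := exists_hasDerivAt_eq_slope (pfPrim t) (pfTerm t) hk
    (fun u _ => (hasDerivAt_pfPrim ht u).continuousAt.continuousWithinAt)
    (fun u _ => hasDerivAt_pfPrim ht u)
  rw [add_sub_cancel_left, div_one] at he
  rw [← he, pfTerm, pfTerm]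
  have hc0 : 0 ≤ c := k.cast_nonneg.trans hc.1.le
  have := hc.2.le
  gcongr

lemma hasSum_pfPrim_sub {t : ℝ} (ht : 0 < t) :
    HasSum (fun k : ℕ => pfPrim t (k + 1) - pfPrim t k) (1 / 2) := by
  have hpi := Real.pi_pos
  rw [hasSum_iff_tendsto_nat_of_nonneg
    (fun k => (pfTerm_nonneg ht _).trans (pfTerm_le_pfPrim_sub ht k))]
  have h1 : Tendsto (fun n : ℕ => 2 * Real.pi * (n : ℝ) / t) atTop atTop :=
    (tendsto_natCast_atTop_atTop.const_mul_atTop (by positivity)).atTop_div_const ht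
  have h2 := ((Real.tendsto_arctan_atTop.mono_right nhdsWithin_le_nhds).comp h1).const_mul
    (1 / Real.pi)
  have e : 1 / Real.pi * (Real.pi / 2) = 1 / 2 := by field_simp
  rw [e] at h2
  refine h2.congr fun n => ?_
  have := Finset.sum_range_sub (fun n : ℕ => pfPrim t n) n
  push_cast at this
  rw [this]
  simp [pfPrim]

/-- A polynomial bound, much weaker than the true exponential decay, suffices for summability. -/
lemma norm_ramR_le {a b : ℝ} (hb : 0 < b) (hab : b ≤ a) :
    ‖ramR a‖ ≤ 144 / (1 - Real.exp (-b)) ^ 2 * (1 / a ^ 4) := by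
  have ha : 0 < a := hb.trans_le hab
  have hE0 := Real.exp_pos (-a)
  have hEb : Real.exp (-a) ≤ Real.exp (-b) := by simpa using hab
  have hb1 : Real.exp (-b) < 1 := by simpa using hb
  have hD : (1 - Real.exp (-b)) ^ 2 ≤ 1 - 2 * Real.exp (-a) * Real.cos a + Real.exp (-a) ^ 2 := by
    have : (1 - Real.exp (-b)) ^ 2 ≤ (1 - Real.exp (-a)) ^ 2 := by
      gcongr
    nlinarith [mul_le_mul_of_nonneg_left (Real.cos_le_one a) hE0.le]
  have hb2 : 0 < (1 - Real.exp (-b)) ^ 2 := by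
    have := sub_pos.mpr hb1
    positivity
  have hE4 : Real.exp (-a) ≤ 24 * (1 / a ^ 4) := by
    have := Real.pow_div_factorial_le_exp a ha.le 4
    norm_num [Nat.factorial] at this
    rw [Real.exp_neg, mul_one_div, ← inv_div]
    exact inv_anti₀ (by positivity) this
  rw [ramR_eq ha, norm_div, Real.norm_eq_abs, Real.norm_eq_abs, abs_of_pos (hb2.trans_le hD)]
  have hN : |2 * Real.exp (-a) * (Real.cos a - Real.sin a - Real.exp (-a))| ≤
      144 * (1 / a ^ 4) := by
    rw [abs_mul, abs_of_pos (by positivity)]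
    have h3 : |Real.cos a - Real.sin a - Real.exp (-a)| ≤ 3 := by
      rw [abs_le]
      constructor <;> linarith [Real.cos_le_one a, Real.neg_one_le_cos a, Real.sin_le_one a,
        Real.neg_one_le_sin a]
    calc 2 * Real.exp (-a) * |Real.cos a - Real.sin a - Real.exp (-a)|
        ≤ 2 * Real.exp (-a) * 3 := by gcongr
      _ ≤ 144 * (1 / a ^ 4) := by linarith
  calc _ ≤ 144 * (1 / a ^ 4) / (1 - Real.exp (-b)) ^ 2 := by gcongr
    _ = _ := by ring

lemma summable_ramR {x : ℝ} (hx : 0 < x) : Summable (fun n : ℕ => 1 / √((n : ℝ) + 1) *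
    ramR (2 * Real.pi * √(Real.pi * (n + 1) / x))) := by
  have hpi := Real.pi_pos
  set b := 2 * Real.pi * √(Real.pi / x) with hb
  have hb0 : 0 < b := by positivity
  refine Summable.of_norm_bounded (g := fun n : ℕ => 144 / (1 - Real.exp (-b)) ^ 2 *
    (1 / (((n : ℝ) + 1) ^ 2 * b ^ 4))) (summable_inv_sq_mul.mul_left _) fun n => ?_
  have hn : (1 : ℝ) ≤ n + 1 := by simp
  have hs : 1 ≤ √((n : ℝ) + 1) := Real.one_le_sqrt.mpr hn
  have e : 2 * Real.pi * √(Real.pi * (n + 1) / x) = b * √((n : ℝ) + 1) := by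
    rw [hb, mul_assoc (2 * Real.pi) (√(Real.pi / x)), ← Real.sqrt_mul (by positivity)]
    congr 2
    ring
  rw [e, norm_mul]
  have h1 : ‖1 / √((n : ℝ) + 1)‖ ≤ 1 := by
    rw [Real.norm_of_nonneg (by positivity), div_le_one (by positivity)]
    exact hs
  have h2 := norm_ramR_le hb0 (le_mul_of_one_le_right hb0.le hs)
  have e2 : (b * √((n : ℝ) + 1)) ^ 4 = ((n : ℝ) + 1) ^ 2 * b ^ 4 := by
    have := Real.sq_sqrt (show (0 : ℝ) ≤ n + 1 by positivity)
    calc _ = b ^ 4 * (√((n : ℝ) + 1) ^ 2) ^ 2 := by ring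
      _ = _ := by rw [this]; ring
  rw [e2] at h2
  exact (mul_le_of_le_one_left (norm_nonneg _) h1).trans h2

/-! ### Interchanging the sums -/

theorem ramanujan_entry_8_zeta_half (x : ℝ) (hx : 0 < x) :
    (∑' n : ℕ, 1 / (Real.exp ((n + 1) ^ 2 * x) - 1)) =
      1 / 4 + Real.pi ^ 2 / (6 * x)
      + 1 / 2 * Real.sqrt (Real.pi / x) * (riemannZeta (1 / 2)).re
      + 1 / 2 * Real.sqrt (Real.pi / x) *
          ∑' n : ℕ, (1 / Real.sqrt (n + 1)) *
            ((Real.cos (2 * Real.pi * Real.sqrt (Real.pi * (n + 1) / x))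
              - Real.sin (2 * Real.pi * Real.sqrt (Real.pi * (n + 1) / x))
              - Real.exp (-(2 * Real.pi * Real.sqrt (Real.pi * (n + 1) / x)))) /
            (Real.cosh (2 * Real.pi * Real.sqrt (Real.pi * (n + 1) / x))
              - Real.cos (2 * Real.pi * Real.sqrt (Real.pi * (n + 1) / x)))) := by
  have hpi := Real.pi_pos
  have hRsum := summable_ramR hx
  have hfold : ∀ a : ℝ, (Real.cos a - Real.sin a - Real.exp (-a)) / (Real.cosh a - Real.cos a) =
      ramR a := fun _ => rfl
  simp only [hfold]
  set P := √(Real.pi / x) with hP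
  have hP0 : 0 < P := by positivity
  have hP2 : P ^ 2 = Real.pi / x := Real.sq_sqrt (by positivity)
  have hsqrt : ∀ v : ℝ, √(Real.pi * v / x) = P * √v := fun v => by
    rw [hP, ← Real.sqrt_mul (by positivity)]; congr 1; ring
  have ht : ∀ n : ℕ, 0 < ((n : ℝ) + 1) ^ 2 * x := fun n => by positivity
  -- Nonnegative, so that the double series may be summed in either order.
  let T : ℕ → ℕ → ℝ := fun n k =>
    (pfPrim ((n + 1) ^ 2 * x) (k + 1) - pfPrim ((n + 1) ^ 2 * x) k) -
      pfTerm ((n + 1) ^ 2 * x) (k + 1)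
  have hT0 : ∀ n k, 0 ≤ T n k := fun n k => sub_nonneg.mpr (pfTerm_le_pfPrim_sub (ht n) k)
  have hrow : ∀ n, HasSum (T n) (1 / (((n : ℝ) + 1) ^ 2 * x) -
      1 / (Real.exp (((n : ℝ) + 1) ^ 2 * x) - 1)) := fun n => by
    have := (hasSum_pfPrim_sub (ht n)).sub (hasSum_pfTerm_nat (ht n))
    convert! this using 1
    ring
  have hLsum : Summable (fun n : ℕ => 1 / (Real.exp (((n : ℝ) + 1) ^ 2 * x) - 1)) := by
    refine Summable.of_nonneg_of_le (fun n => ?_) (fun n => ?_) (summable_inv_sq_mul (x := x))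
    · have := Real.add_one_le_exp (((n : ℝ) + 1) ^ 2 * x)
      have := ht n
      exact div_nonneg zero_le_one (by linarith)
    · exact sub_nonneg.mp ((hrow n).nonneg (hT0 n))
  have hTsum : Summable (Function.uncurry T) := by
    refine (summable_prod_of_nonneg (fun q => hT0 q.1 q.2)).mpr ⟨fun n => (hrow n).summable, ?_⟩
    simp only [(hrow _).tsum_eq]
    exact summable_inv_sq_mul.sub hLsum
  have hcol : ∀ k : ℕ, HasSum (fun n => T n k) ((primSum x (k + 1) - primSum x k) -
      Real.pi / (2 * x * √(Real.pi * (k + 1) / x)) *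
        (1 + ramR (2 * Real.pi * √(Real.pi * (k + 1) / x)))) := fun k =>
    ((summable_pfPrim hx _).hasSum.sub (summable_pfPrim hx _).hasSum).sub
      (hasSum_pfTerm_sq hx (by positivity))
  have hswap := hTsum.tsum_comm
  simp only [(hrow _).tsum_eq, (hcol _).tsum_eq] at hswap
  have hcolsum : Summable (fun k : ℕ => (primSum x (k + 1) - primSum x k) -
      Real.pi / (2 * x * √(Real.pi * (k + 1) / x)) *
        (1 + ramR (2 * Real.pi * √(Real.pi * (k + 1) / x)))) := by
    refine hTsum.prod_symm.prod.congr fun k => ?_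
    simpa using (hcol k).tsum_eq
  -- Removing the main term `P √u` from `primSum x u` leaves a sequence with limit `-1 / 4`.
  let Q : ℕ → ℝ := fun k => primSum x k - P * √k
  have hsplit : ∀ k : ℕ, (primSum x (k + 1) - primSum x k) -
      Real.pi / (2 * x * √(Real.pi * (k + 1) / x)) *
        (1 + ramR (2 * Real.pi * √(Real.pi * (k + 1) / x))) =
      (Q (k + 1) - Q k) - 1 / 2 * P * (1 / √((k : ℝ) + 1) - 2 * (√((k : ℝ) + 1) - √(k : ℝ)))
        - 1 / 2 * P * (1 / √((k : ℝ) + 1) * ramR (2 * Real.pi * √(Real.pi * (k + 1) / x))) := by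
    intro k
    have hs : 0 < √((k : ℝ) + 1) := by positivity
    have e : Real.pi / (2 * x * √(Real.pi * (k + 1) / x)) = 1 / 2 * P * (1 / √((k : ℝ) + 1)) := by
      have : Real.pi = P ^ 2 * x := by rw [hP2]; field_simp
      rw [hsqrt]
      nth_rw 1 [this]
      field_simp
    rw [e]
    simp only [Q]
    push_cast
    ring
  simp only [hsplit] at hswap hcolsum
  have hz := hasSum_zeta_half.mul_left (1 / 2 * P)
  have hr := hRsum.hasSum.mul_left (1 / 2 * P)
  have hQsum : Summable (fun k : ℕ => Q (k + 1) - Q k) := by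
    refine ((hcolsum.add hz.summable).add hr.summable).congr fun k => ?_
    ring
  have hQlim : Tendsto Q atTop (𝓝 (-1 / 4)) := by
    have h1 : Tendsto (fun k : ℕ => 2 * Real.pi * (P * √(k : ℝ))) atTop atTop :=
      ((Real.tendsto_sqrt_atTop.comp tendsto_natCast_atTop_atTop).const_mul_atTop
        hP0).const_mul_atTop (by positivity)
    have h2 := ((tendsto_ramPrim_atTop.comp h1).sub_const (Real.pi / 2)).const_mul
      (1 / (2 * Real.pi))
    have e : 1 / (2 * Real.pi) * (0 - Real.pi / 2) = -1 / 4 := by field_simp; ring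
    rw [e] at h2
    refine h2.congr' ?_
    filter_upwards [eventually_gt_atTop 0] with k hk
    have hk : (0 : ℝ) < k := by exact_mod_cast hk
    simp only [Q, primSum_eq hx hk, hsqrt, Function.comp]
    ring
  have hQ0 : Q 0 = 0 := by simp [Q, primSum_zero]
  have hQ : HasSum (fun k : ℕ => Q (k + 1) - Q k) (-1 / 4) := by
    rw [hQsum.hasSum_iff_tendsto_nat]
    refine hQlim.congr fun n => ?_
    rw [Finset.sum_range_sub, hQ0, sub_zero]
  rw [((hQ.sub hz).sub hr).tsum_eq, (summable_inv_sq_mul.tsum_sub hLsum)] at hswap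
  have hbasel : ∑' n : ℕ, 1 / (((n : ℝ) + 1) ^ 2 * x) = Real.pi ^ 2 / (6 * x) := by
    have h := (hasSum_nat_add_iff' 1).mpr hasSum_zeta_two
    have h := h.mul_right (1 / x)
    simp only [Finset.range_one, Finset.sum_singleton, Nat.cast_zero] at h
    have e : (fun n : ℕ => 1 / (((n : ℝ) + 1) ^ 2 * x)) =
        fun n : ℕ => 1 / ((n + 1 : ℕ) : ℝ) ^ 2 * (1 / x) := by
      ext n
      push_cast
      rw [one_div_mul_one_div]
    rw [e, h.tsum_eq]
    field_simp
    norm_num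
  rw [hbasel] at hswap
  linarith
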